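/- arXiv:1409.6110 — 4 statements merged into one kernel-verified Lean document; each statement's English description precedes it below -/
import Mathlib

section
/- Suppose the finite arm set X ⊂ ℝ^d spans ℝ^d and Δ_min = min_{y∈Y*} Δ(y) > 0. Then the complexity satisfies H_LB ≤ 4d / Δ_min². -/
open Matrix

/-!
By the Kiefer–Wolfowitz theorem there is a design `λ` with `x^⊤ Λ_λ⁻¹ x ≤ d` for every arm `x`:
a maximiser of `det Λ_λ` over the (compact) simplex of designs. The spanning hypothesis makes the
uniform design positive definite, so the maximal determinant is positive. Moving mass towards an
arm `x`, that is passing to `(λ + u δ_x) / (1 + u)`, multiplies the determinant by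
`(1 + u x^⊤ Λ_λ⁻¹ x) / (1 + u) ^ d` by the matrix determinant lemma; this factor is at most `1`
for all `u ≥ 0`, and comparing first orders at `u = 0` gives `x^⊤ Λ_λ⁻¹ x ≤ d`.

For this design `‖x* - x‖² ≤ 2 (‖x*‖² + ‖x‖²) ≤ 4 d` in the norm of `Λ_λ⁻¹`, and dividing by
`Δ(x* - x)² ≥ Δ_min²` bounds its objective value by `4 d / Δ_min²`, hence also the infimum, as all
objective values are nonnegative.
-/

/-- The design matrix `∑ x ∈ X, w x • x x^⊤` of a weight vector indexed by the arms. -/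
def designMatrix {d : ℕ} (X : Finset (Fin d → ℝ)) (w : X → ℝ) : Matrix (Fin d) (Fin d) ℝ :=
  ∑ x : X, w x • vecMulVec x.1 x.1

lemma vecMulVec_self_posSemidef {d : ℕ} (a : Fin d → ℝ) : (vecMulVec a a).PosSemidef := by
  simpa using posSemidef_vecMulVec_self_star a

lemma designMatrix_posSemidef {d : ℕ} (X : Finset (Fin d → ℝ)) (w : X → ℝ)
    (hw : ∀ x, 0 ≤ w x) : (designMatrix X w).PosSemidef :=
  posSemidef_sum _ fun x _ => (vecMulVec_self_posSemidef x.1).smul (hw x)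

lemma dotProduct_designMatrix_mulVec {d : ℕ} (X : Finset (Fin d → ℝ)) (w : X → ℝ)
    (v : Fin d → ℝ) : v ⬝ᵥ (designMatrix X w *ᵥ v) = ∑ x : X, w x * (x.1 ⬝ᵥ v) ^ 2 := by
  simp only [designMatrix, sum_mulVec, dotProduct_sum, smul_mulVec, dotProduct_smul,
    vecMulVec_mulVec, smul_eq_mul]
  refine Finset.sum_congr rfl fun x _ => ?_
  simp [dotProduct_comm v, pow_two]

lemma designMatrix_posDef {d : ℕ} (X : Finset (Fin d → ℝ))
    (hspan : Submodule.span ℝ (X : Set (Fin d → ℝ)) = ⊤) (w : X → ℝ)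
    (hw : ∀ x, 0 < w x) : (designMatrix X w).PosDef := by
  have hps := designMatrix_posSemidef X w fun x => (hw x).le
  refine .of_dotProduct_mulVec_pos hps.1 fun v hv => ?_
  rw [star_trivial, dotProduct_designMatrix_mulVec]
  have hnn : ∀ x ∈ Finset.univ, 0 ≤ w x * (x.1 ⬝ᵥ v) ^ 2 := fun x _ =>
    mul_nonneg (hw x).le (sq_nonneg _)
  refine (Finset.sum_nonneg hnn).lt_of_ne' fun h0 => hv ?_
  rw [Finset.sum_eq_zero_iff_of_nonneg hnn] at h0
  have horth : ∀ y ∈ Submodule.span ℝ (X : Set (Fin d → ℝ)), y ⬝ᵥ v = 0 := by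
    intro y hy
    induction hy using Submodule.span_induction with
    | mem x hx =>
      have := h0 ⟨x, hx⟩ (Finset.mem_univ _)
      simpa [(hw _).ne'] using this
    | zero => simp
    | add a b _ _ ha hb => rw [add_dotProduct, ha, hb, add_zero]
    | smul c a _ ha => rw [smul_dotProduct, ha, smul_zero]
  exact dotProduct_self_eq_zero.mp (horth v (hspan ▸ Submodule.mem_top))

lemma continuous_det_designMatrix {d : ℕ} (X : Finset (Fin d → ℝ)) :
    Continuous fun w : X → ℝ => (designMatrix X w).det := by
  unfold designMatrix
  fun_prop

/-- First-order comparison at `u = 0`. -/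
lemma le_of_forall_one_add_mul_le_pow {d : ℕ} {s : ℝ}
    (h : ∀ u : ℝ, 0 ≤ u → 1 + u * s ≤ (1 + u) ^ d) : s ≤ d := by
  by_contra! hs
  have hd : (0 : ℝ) ≤ d := d.cast_nonneg
  rcases hd.eq_or_lt with h0 | hd0
  · have h1 := h 1 zero_le_one
    have : d = 0 := by exact_mod_cast h0.symm
    subst this
    simp at h1 hs
    linarith
  have hs0 : 0 < s := hd0.trans hs
  -- `(1 + u) ^ d ≤ exp (d u) ≤ 1 / (1 - d u)` turns the hypothesis into `s - d ≤ d s u`,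
  -- which fails for `u` half of `(s - d) / (d s)`.
  set u : ℝ := (s - d) / (2 * d * s) with hu
  have hu0 : 0 ≤ u := by
    apply div_nonneg <;> first | linarith | positivity
  have hdsu : d * s * u = (s - d) / 2 := by rw [hu]; field_simp
  have hu1 : d * u < 1 := by nlinarith
  have hexp : (1 + u) ^ d ≤ Real.exp (d * u) := by
    rw [Real.exp_nat_mul]
    exact pow_le_pow_left₀ (by linarith) (by linarith [Real.add_one_le_exp u]) _
  have h1 : (1 + u * s) * (1 - d * u) ≤ 1 := by
    calc (1 + u * s) * (1 - d * u)
        ≤ Real.exp (d * u) * Real.exp (-(d * u)) :=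
          mul_le_mul ((h u hu0).trans hexp) (by linarith [Real.add_one_le_exp (-(d * u))])
            (by linarith) (Real.exp_pos _).le
      _ = 1 := by rw [← Real.exp_add]; simp
  have hupos : 0 < u := by
    apply div_pos <;> first | linarith | positivity
  have h2 : u * (s - d) ≤ u * (d * s * u) := by linarith
  have h3 := le_of_mul_le_mul_left h2 hupos
  linarith

/-- Kiefer–Wolfowitz: some design has `x^⊤ Λ⁻¹ x ≤ d` for every arm. -/
lemma exists_design_le {d : ℕ} (X : Finset (Fin d → ℝ)) (hne : X.Nonempty)
    (hspan : Submodule.span ℝ (X : Set (Fin d → ℝ)) = ⊤) :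
    ∃ w : X → ℝ, w ∈ stdSimplex ℝ X ∧ IsUnit (designMatrix X w) ∧
      ∀ x ∈ X, x ⬝ᵥ ((designMatrix X w)⁻¹ *ᵥ x) ≤ d := by
  classical
  have hcard : (0 : ℝ) < X.card := by exact_mod_cast hne.card_pos
  have hunif : (fun _ => (X.card : ℝ)⁻¹ : X → ℝ) ∈ stdSimplex ℝ X :=
    ⟨fun _ => by positivity, by simp [hcard.ne']⟩
  obtain ⟨w, hw, hmax⟩ := (isCompact_stdSimplex ℝ X).exists_isMaxOn ⟨_, hunif⟩
    (continuous_det_designMatrix X).continuousOn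
  have hdet : 0 < (designMatrix X w).det :=
    (designMatrix_posDef X hspan _ fun _ => inv_pos.mpr hcard).det_pos.trans_le (hmax hunif)
  have hunit : IsUnit (designMatrix X w).det := hdet.ne'.isUnit
  refine ⟨w, hw, (isUnit_iff_isUnit_det _).mpr hunit, fun x hx => ?_⟩
  refine le_of_forall_one_add_mul_le_pow fun u hu => ?_
  have h1u : 0 < 1 + u := by linarith
  set w' : X → ℝ := (1 + u)⁻¹ • (w + u • Pi.single ⟨x, hx⟩ 1) with hw'
  have hmem : w' ∈ stdSimplex ℝ X := by
    constructor
    · intro y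
      have : 0 ≤ (Pi.single ⟨x, hx⟩ 1 : X → ℝ) y := by
        rw [Pi.single_apply]; split_ifs <;> simp
      have := hw.1 y
      simp only [hw', Pi.smul_apply, Pi.add_apply, smul_eq_mul]
      positivity
    · have hw1 : ∑ y, w y = 1 := hw.2
      simp only [hw', Pi.smul_apply, Pi.add_apply, smul_eq_mul, ← Finset.mul_sum,
        Finset.sum_add_distrib, hw1, Finset.sum_pi_single', Finset.mem_univ, if_true, mul_one]
      exact inv_mul_cancel₀ h1u.ne'
  have hmat : designMatrix X w' = (1 + u)⁻¹ • (designMatrix X w + u • vecMulVec x x) := by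
    simp only [designMatrix, hw', Pi.smul_apply, Pi.add_apply, smul_eq_mul, mul_smul, add_smul,
      Finset.sum_add_distrib, ← Finset.smul_sum, Pi.single_apply, ite_smul, one_smul, zero_smul]
    simp
  have hupd : (designMatrix X w + u • vecMulVec x x).det =
      (designMatrix X w).det * (1 + u * (x ⬝ᵥ ((designMatrix X w)⁻¹ *ᵥ x))) := by
    have := det_add_replicateCol_mul_replicateRow (ι := Unit) hunit (u • x) x
    rw [← vecMulVec_eq, smul_vecMulVec] at this
    rw [this, det_unique (n := Unit), Matrix.mul_assoc, ← replicateCol_mulVec]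
    simp [mulVec_smul, replicateRow_mul_replicateCol_apply]
  have hle : (designMatrix X w').det ≤ (designMatrix X w).det := hmax hmem
  rw [hmat, det_smul, Fintype.card_fin, hupd, inv_pow, inv_mul_le_iff₀ (by positivity),
    mul_comm _ (designMatrix X w).det] at hle
  exact le_of_mul_le_mul_left hle hdet

/-- The parallelogram inequality for the seminorm of a positive semidefinite matrix. -/
lemma quadForm_sub_le {d : ℕ} {M : Matrix (Fin d) (Fin d) ℝ} (hM : M.PosSemidef)
    (a b : Fin d → ℝ) :
    (a - b) ⬝ᵥ (M *ᵥ (a - b)) ≤ 2 * (a ⬝ᵥ (M *ᵥ a)) + 2 * (b ⬝ᵥ (M *ᵥ b)) := by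
  have h := hM.dotProduct_mulVec_nonneg (a + b)
  simp only [star_trivial, mulVec_add, mulVec_sub, add_dotProduct, sub_dotProduct,
    dotProduct_add, dotProduct_sub] at h ⊢
  linarith

theorem statement6 {d : ℕ}
    (X : Finset (Fin d → ℝ)) (θstar xstar : Fin d → ℝ) (hxstar : xstar ∈ X)
    (hspan : Submodule.span ℝ (X : Set (Fin d → ℝ)) = ⊤)
    (hbest : ∀ x ∈ X, x ≠ xstar → 0 < (xstar - x) ⬝ᵥ θstar)
    (Δmin : ℝ)
    (hΔmin : IsLeast {g : ℝ | ∃ x ∈ X, x ≠ xstar ∧ g = (xstar - x) ⬝ᵥ θstar} Δmin)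
    (hΔpos : 0 < Δmin)
    (HLB : ℝ)
    (hHLB : HLB = sInf {ρ : ℝ | ∃ w : (Fin d → ℝ) → ℝ,
      (∀ x, 0 ≤ w x) ∧ (∑ x ∈ X, w x = 1) ∧
      IsUnit (∑ x ∈ X, w x • vecMulVec x x) ∧
      ρ = sSup {v : ℝ | ∃ x ∈ X, x ≠ xstar ∧
        v = ((xstar - x) ⬝ᵥ ((∑ x' ∈ X, w x' • vecMulVec x' x')⁻¹ *ᵥ (xstar - x))) /
            ((xstar - x) ⬝ᵥ θstar) ^ 2}}) :
    HLB ≤ 4 * d / Δmin ^ 2 := by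
  classical
  obtain ⟨w, hw, hunit, hle⟩ := exists_design_le X ⟨xstar, hxstar⟩ hspan
  -- The weights of the design, extended by `0` outside the arm set.
  set W : (Fin d → ℝ) → ℝ := fun x => if hx : x ∈ X then w ⟨x, hx⟩ else 0 with hW
  have hWX : ∀ x : X, W x.1 = w x := fun x => by simp [hW]
  have hsum : ∑ x ∈ X, W x = 1 := by
    rw [← Finset.sum_coe_sort, ← hw.2]
    exact Finset.sum_congr rfl fun x _ => hWX x
  have hmat : ∑ x ∈ X, W x • vecMulVec x x = designMatrix X w := by
    rw [← Finset.sum_coe_sort, designMatrix]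
    exact Finset.sum_congr rfl fun x _ => by rw [hWX]
  rw [hHLB]
  have hWnn : ∀ x, 0 ≤ W x := fun x => by
    simp only [hW]
    split_ifs
    · exact hw.1 _
    · exact le_rfl
  refine le_trans (csInf_le ?_ ⟨W, hWnn, hsum, hmat ▸ hunit, rfl⟩) ?_
  · refine ⟨0, ?_⟩
    rintro ρ ⟨v, hv, -, -, rfl⟩
    refine Real.sSup_nonneg ?_
    rintro _ ⟨x, -, -, rfl⟩
    have hps : (∑ x ∈ X, v x • vecMulVec x x).PosSemidef :=
      posSemidef_sum _ fun x _ => (vecMulVec_self_posSemidef x).smul (hv x)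
    have := hps.inv.dotProduct_mulVec_nonneg (xstar - x)
    rw [star_trivial] at this
    positivity
  · refine Real.sSup_le ?_ (by positivity)
    rintro _ ⟨x, hx, hne, rfl⟩
    rw [hmat]
    have hnum := quadForm_sub_le (designMatrix_posSemidef X w hw.1).inv xstar x
    have hgap : Δmin ≤ (xstar - x) ⬝ᵥ θstar := hΔmin.2 ⟨x, hx, hne, rfl⟩
    refine div_le_div₀ (by positivity) ?_ (by positivity) (by gcongr)
    linarith [hle x hx, hle xstar hxstar]
end

section
/- Let X = {e_1, …, e_K} be the canonical basis of ℝ^K and θ* ∈ ℝ^K with a unique largest coordinate i*, so x* = e_{i*}. Let Δ_i = θ*_{i*} − θ*_i for i ≠ i* and Δ_min = min_{i≠i*} Δ_i > 0, and define H_MAB = 1/Δ_min² + Σ_{i≠i*} 1/Δ_i². Then H_LB ≤ 2·H_MAB; indeed the design λ(e_i) = 1/(ν Δ_i²) for i ≠ i* and λ(e_{i*}) = 1/(ν Δ_min²), with ν = 1/Δ_min² + Σ_{i≠i*} 1/Δ_i², achieves max_{y∈Y*} ||y||²_{Λ_λ^{-1}}/Δ(y)² ≤ 2·H_MAB. -/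
/-! The design matrix of the canonical basis with weights `v` is `diagonal v`, so for nonzero
weights `‖e_a - e_i‖²_{Λ⁻¹} = 1 / v a + 1 / v i`. With the explicit design this equals
`ν (Δ_min² + Δ_i²)`, which is at most `2 ν Δ_i²` because `Δ_min ≤ Δ_i`. The weights are positive
and sum to one by the choice of `ν`, so this design is one of the competitors in the infimum
defining `H_LB`; that infimum is over a set bounded below by `0`. -/

open Matrix

lemma design_eq_diagonal {K : ℕ} (v : Fin K → ℝ) :
    (∑ j, v j • vecMulVec (Pi.single j (1 : ℝ)) (Pi.single j 1)) = diagonal v := by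
  ext a b
  simp [Matrix.sum_apply, vecMulVec_apply, Pi.single_apply, diagonal_apply, eq_comm]
  split_ifs with h <;> simp [h]

lemma quadForm_inv_diagonal {K : ℕ} (v : Fin K → ℝ) (hv : ∀ i, v i ≠ 0) {a i : Fin K}
    (hi : i ≠ a) :
    ((Pi.single a (1 : ℝ) - Pi.single i 1) ⬝ᵥ
      ((diagonal v)⁻¹ *ᵥ (Pi.single a (1 : ℝ) - Pi.single i 1))) = 1 / v a + 1 / v i := by
  have hinv : (diagonal v)⁻¹ = diagonal (fun j => (v j)⁻¹) := by
    apply inv_eq_right_inv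
    rw [diagonal_mul_diagonal, ← diagonal_one]
    congr 1
    funext j
    exact mul_inv_cancel₀ (hv j)
  rw [hinv, sub_dotProduct, single_one_dotProduct, single_one_dotProduct, mulVec_diagonal,
    mulVec_diagonal]
  simp [hi, hi.symm]

/-- MAB reduction, upper part: with the canonical basis as arm set, the explicit
design `λ(e_i) = 1/(ν Δ_i²)`, `λ(e_{i*}) = 1/(ν Δ_min²)` certifies that every
direction value `‖e_{i*} - e_i‖²_{Λ⁻¹}/Δ_i²` is at most `2 H_MAB`, hence
`H_LB ≤ 2 H_MAB`. -/
theorem statement7 {K : ℕ}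
    (θstar : Fin K → ℝ) (istar : Fin K)
    (hbest : ∀ i, i ≠ istar → θstar i < θstar istar)
    (Δ : Fin K → ℝ) (hΔ : ∀ i, Δ i = θstar istar - θstar i)
    (Δmin : ℝ)
    (hΔmin : IsLeast {g : ℝ | ∃ i, i ≠ istar ∧ g = Δ i} Δmin)
    (hΔpos : 0 < Δmin)
    (HMAB : ℝ)
    (hHMAB : HMAB = 1 / Δmin ^ 2 + ∑ i ∈ Finset.univ.erase istar, 1 / Δ i ^ 2)
    (ν : ℝ)
    (hν : ν = 1 / Δmin ^ 2 + ∑ i ∈ Finset.univ.erase istar, 1 / Δ i ^ 2)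
    (w : Fin K → ℝ)
    (hw : ∀ i, w i = if i = istar then 1 / (ν * Δmin ^ 2) else 1 / (ν * Δ i ^ 2))
    (HLB : ℝ)
    (hHLB : HLB = sInf {ρ : ℝ | ∃ v : Fin K → ℝ, (∀ i, 0 ≤ v i) ∧ (∑ i, v i = 1) ∧
      IsUnit (∑ j, v j • vecMulVec (Pi.single j (1 : ℝ)) (Pi.single j 1)) ∧
      ρ = sSup {u : ℝ | ∃ i, i ≠ istar ∧ u =
        ((Pi.single istar (1 : ℝ) - Pi.single i 1) ⬝ᵥ
          ((∑ j, v j • vecMulVec (Pi.single j (1 : ℝ)) (Pi.single j 1))⁻¹ *ᵥ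
            (Pi.single istar (1 : ℝ) - Pi.single i 1))) / Δ i ^ 2}}) :
    (∀ i, i ≠ istar →
      ((Pi.single istar (1 : ℝ) - Pi.single i 1) ⬝ᵥ
        ((∑ j, w j • vecMulVec (Pi.single j (1 : ℝ)) (Pi.single j 1))⁻¹ *ᵥ
          (Pi.single istar (1 : ℝ) - Pi.single i 1))) / Δ i ^ 2 ≤ 2 * HMAB) ∧
    HLB ≤ 2 * HMAB := by
  have hmin : ∀ i, i ≠ istar → Δmin ≤ Δ i := fun i hi => hΔmin.2 ⟨i, hi, rfl⟩
  have hpos : ∀ i, i ≠ istar → 0 < Δ i := fun i hi => hΔpos.trans_le (hmin i hi)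
  have hνpos : 0 < ν := by
    rw [hν]
    have h1 : 0 ≤ ∑ i ∈ Finset.univ.erase istar, 1 / Δ i ^ 2 :=
      Finset.sum_nonneg fun i _ => by positivity
    positivity
  have hwpos : ∀ i, 0 < w i := by
    intro i
    rw [hw]
    split_ifs with h
    · positivity
    · have := hpos i h
      positivity
  have hwsum : ∑ i, w i = 1 := by
    rw [← Finset.add_sum_erase _ _ (Finset.mem_univ istar)]
    have h1 : ∑ i ∈ Finset.univ.erase istar, w i
        = ν⁻¹ * ∑ i ∈ Finset.univ.erase istar, 1 / Δ i ^ 2 := by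
      rw [Finset.mul_sum]
      refine Finset.sum_congr rfl fun i hi => ?_
      rw [hw, if_neg (Finset.ne_of_mem_erase hi)]
      simp [mul_comm]
    have h2 : w istar = ν⁻¹ * (1 / Δmin ^ 2) := by
      rw [hw, if_pos rfl]
      simp [mul_comm]
    rw [h1, h2, ← mul_add, ← hν, inv_mul_cancel₀ hνpos.ne']
  simp only [design_eq_diagonal] at hHLB ⊢
  have key : ∀ i, i ≠ istar →
      ((Pi.single istar (1 : ℝ) - Pi.single i 1) ⬝ᵥ
        ((diagonal w)⁻¹ *ᵥ (Pi.single istar (1 : ℝ) - Pi.single i 1))) / Δ i ^ 2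
          ≤ 2 * HMAB := by
    intro i hi
    have h0 := hpos i hi
    rw [quadForm_inv_diagonal w (fun j => (hwpos j).ne') hi, hw istar, hw i, if_pos rfl, if_neg hi,
      one_div_one_div, one_div_one_div, div_le_iff₀ (by positivity), hHMAB, ← hν]
    have h1 : Δmin ^ 2 ≤ Δ i ^ 2 := pow_le_pow_left₀ hΔpos.le (hmin i hi) 2
    nlinarith [mul_le_mul_of_nonneg_left h1 hνpos.le]
  refine ⟨key, ?_⟩
  have hHpos : 0 ≤ 2 * HMAB := by
    rw [hHMAB, ← hν]
    positivity
  rw [hHLB]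
  refine csInf_le_of_le ?_ ⟨w, fun i => (hwpos i).le, hwsum, ?_, rfl⟩ ?_
  · refine ⟨0, ?_⟩
    rintro ρ ⟨v, hv0, -, hu, rfl⟩
    have hv : ∀ j, v j ≠ 0 := fun j => ((Pi.isUnit_iff.1 (isUnit_diagonal.1 hu)) j).ne_zero
    refine Real.sSup_nonneg ?_
    rintro u ⟨i, hi, rfl⟩
    rw [quadForm_inv_diagonal v hv hi]
    have := hv0 istar
    have := hv0 i
    positivity
  · exact isUnit_diagonal.2 (Pi.isUnit_iff.2 fun j => (hwpos j).ne'.isUnit)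
  · refine Real.sSup_le ?_ hHpos
    rintro u ⟨i, hi, rfl⟩
    exact key i hi
end

section
/- Let X = {e_1, …, e_K} be the canonical basis of ℝ^K and θ* ∈ ℝ^K with a unique largest coordinate i*, so x* = e_{i*}. Let Δ_i = θ*_{i*} − θ*_i for i ≠ i*, Δ_min = min_{i≠i*} Δ_i > 0, and H_MAB = 1/Δ_min² + Σ_{i≠i*} 1/Δ_i². Then H_MAB ≤ H_LB, i.e., for every design λ with Λ_λ invertible, max_{y∈Y*} ||y||²_{Λ_λ^{-1}} / Δ(y)² ≥ H_MAB. -/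
open Matrix

lemma direction_value {K : ℕ} (v : Fin K → ℝ) (hv : ∀ i, v i ≠ 0) {s i : Fin K} (h : i ≠ s) :
    ((Pi.single s (1 : ℝ) - Pi.single i 1) ⬝ᵥ
      ((diagonal v)⁻¹ *ᵥ (Pi.single s (1 : ℝ) - Pi.single i 1))) = 1 / v s + 1 / v i := by
  have hinv : (diagonal v)⁻¹ = diagonal (fun j => 1 / v j) := by
    apply Matrix.inv_eq_right_inv
    rw [diagonal_mul_diagonal, ← diagonal_one]
    congr 1
    funext j
    exact mul_one_div_cancel (hv j)
  rw [hinv, mulVec_sub, sub_dotProduct, dotProduct_sub, dotProduct_sub]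
  simp [h, h.symm]

/-- The bound for a fixed positive design, with the quadratic form already evaluated. The arm `m`
is arbitrary here; taking the one with the smallest gap gives `HMAB`. -/
lemma exists_large_value {K : ℕ} (s : Fin K) (Δ : Fin K → ℝ) (hΔ : ∀ i, i ≠ s → 0 < Δ i)
    (m : Fin K) (hm : m ≠ s) (v : Fin K → ℝ) (hv : ∀ i, 0 < v i) (hsum : ∑ i, v i = 1) :
    ∃ i, i ≠ s ∧ 1 / Δ m ^ 2 + ∑ i ∈ Finset.univ.erase s, 1 / Δ i ^ 2 ≤
      (1 / v s + 1 / v i) / Δ i ^ 2 := by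
  by_contra! hcon
  set H := 1 / Δ m ^ 2 + ∑ i ∈ Finset.univ.erase s, 1 / Δ i ^ 2 with hH
  -- Each summand `1 / x` of a direction value is on its own below `H * Δ i ^ 2`.
  have key : ∀ i, i ≠ s → ∀ x, 0 < x → 1 / x ≤ 1 / v s + 1 / v i → 1 / Δ i ^ 2 < H * x := by
    intro i hi x hx hle
    have hd : 0 < Δ i ^ 2 := pow_pos (hΔ i hi) 2
    have h1 := (div_lt_iff₀ hd).1 (hcon i hi)
    have h2 : 1 / x < H * Δ i ^ 2 := hle.trans_lt h1
    rw [div_lt_iff₀ hx] at h2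
    rw [div_lt_iff₀ hd]
    linarith
  have h0 : 1 / Δ m ^ 2 < H * v s :=
    key m hm _ (hv s) (le_add_of_nonneg_right (one_div_pos.2 (hv m)).le)
  have h1 : ∑ i ∈ Finset.univ.erase s, 1 / Δ i ^ 2 ≤ ∑ i ∈ Finset.univ.erase s, H * v i :=
    Finset.sum_le_sum fun i hi => (key i (Finset.ne_of_mem_erase hi) _ (hv i)
      (le_add_of_nonneg_left (one_div_pos.2 (hv s)).le)).le
  have h2 : H * v s + ∑ i ∈ Finset.univ.erase s, H * v i = H := by
    rw [Finset.add_sum_erase _ (fun i => H * v i) (Finset.mem_univ s), ← Finset.mul_sum, hsum,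
      mul_one]
  linarith

/-- MAB reduction, lower part: with the canonical basis as arm set, every design
with invertible design matrix has some direction value
`‖e_{i*} - e_i‖²_{Λ⁻¹}/Δ_i²` at least `H_MAB` (i.e. the max over directions is at
least `H_MAB`), hence `H_MAB ≤ H_LB`. -/
theorem statement8 {K : ℕ}
    (θstar : Fin K → ℝ) (istar : Fin K)
    (hbest : ∀ i, i ≠ istar → θstar i < θstar istar)
    (Δ : Fin K → ℝ) (hΔ : ∀ i, Δ i = θstar istar - θstar i)
    (Δmin : ℝ)
    (hΔmin : IsLeast {g : ℝ | ∃ i, i ≠ istar ∧ g = Δ i} Δmin)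
    (hΔpos : 0 < Δmin)
    (HMAB : ℝ)
    (hHMAB : HMAB = 1 / Δmin ^ 2 + ∑ i ∈ Finset.univ.erase istar, 1 / Δ i ^ 2)
    (HLB : ℝ)
    (hHLB : HLB = sInf {ρ : ℝ | ∃ v : Fin K → ℝ, (∀ i, 0 ≤ v i) ∧ (∑ i, v i = 1) ∧
      IsUnit (∑ j, v j • vecMulVec (Pi.single j (1 : ℝ)) (Pi.single j 1)) ∧
      ρ = sSup {u : ℝ | ∃ i, i ≠ istar ∧ u =
        ((Pi.single istar (1 : ℝ) - Pi.single i 1) ⬝ᵥ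
          ((∑ j, v j • vecMulVec (Pi.single j (1 : ℝ)) (Pi.single j 1))⁻¹ *ᵥ
            (Pi.single istar (1 : ℝ) - Pi.single i 1))) / Δ i ^ 2}}) :
    (∀ v : Fin K → ℝ, (∀ i, 0 ≤ v i) → (∑ i, v i = 1) →
      IsUnit (∑ j, v j • vecMulVec (Pi.single j (1 : ℝ)) (Pi.single j 1)) →
      ∃ i, i ≠ istar ∧ HMAB ≤
        ((Pi.single istar (1 : ℝ) - Pi.single i 1) ⬝ᵥ
          ((∑ j, v j • vecMulVec (Pi.single j (1 : ℝ)) (Pi.single j 1))⁻¹ *ᵥ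
            (Pi.single istar (1 : ℝ) - Pi.single i 1))) / Δ i ^ 2) ∧
    HMAB ≤ HLB := by
  obtain ⟨⟨m, hm, hmeq⟩, hlow⟩ := hΔmin
  have hpos : ∀ i, i ≠ istar → 0 < Δ i := fun i hi => hΔpos.trans_le (hlow ⟨i, hi, rfl⟩)
  have main : ∀ v : Fin K → ℝ, (∀ i, 0 ≤ v i) → (∑ i, v i = 1) →
      IsUnit (∑ j, v j • vecMulVec (Pi.single j (1 : ℝ)) (Pi.single j 1)) →
      ∃ i, i ≠ istar ∧ HMAB ≤
        ((Pi.single istar (1 : ℝ) - Pi.single i 1) ⬝ᵥ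
          ((∑ j, v j • vecMulVec (Pi.single j (1 : ℝ)) (Pi.single j 1))⁻¹ *ᵥ
            (Pi.single istar (1 : ℝ) - Pi.single i 1))) / Δ i ^ 2 := by
    intro v hv hsum hu
    rw [design_eq_diagonal] at hu ⊢
    have hne : ∀ i, v i ≠ 0 := fun i => ((Pi.isUnit_iff.1 (isUnit_diagonal.1 hu)) i).ne_zero
    obtain ⟨i, hi, hle⟩ := exists_large_value istar Δ hpos m hm v
      (fun i => lt_of_le_of_ne (hv i) (hne i).symm) hsum
    refine ⟨i, hi, ?_⟩
    rw [direction_value v hne hi, hHMAB, hmeq]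
    exact hle
  refine ⟨main, ?_⟩
  rw [hHLB]
  apply le_csInf
  · have hK : (K : ℝ) ≠ 0 := Nat.cast_ne_zero.2 (Fin.pos istar).ne'
    refine ⟨_, fun _ => 1 / (K : ℝ), fun _ => by positivity, ?_, ?_, rfl⟩
    · simp [hK]
    · rw [design_eq_diagonal, isUnit_diagonal, Pi.isUnit_iff]
      exact fun _ => (one_div_ne_zero hK).isUnit
  · rintro ρ ⟨v, hv, hsum, hu, rfl⟩
    obtain ⟨i, hi, hle⟩ := main v hv hsum hu
    refine hle.trans (le_csSup ?_ ⟨i, hi, rfl⟩)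
    -- The direction values are indexed by the finitely many arms, so they are bounded above.
    refine ((Set.finite_range fun i : Fin K => ((Pi.single istar (1 : ℝ) - Pi.single i 1) ⬝ᵥ
          ((∑ j, v j • vecMulVec (Pi.single j (1 : ℝ)) (Pi.single j 1))⁻¹ *ᵥ
            (Pi.single istar (1 : ℝ) - Pi.single i 1))) / Δ i ^ 2).subset ?_).bddAbove
    rintro u ⟨i, -, rfl⟩
    exact ⟨i, rfl⟩
end

section
/- (Kiefer–Wolfowitz equivalence theorem.) Let X ⊂ ℝ^d be a finite set spanning ℝ^d. For a design λ on X with Λ_λ invertible, the following are equivalent: (1) λ maximizes det Λ_μ over all designs μ on X; (2) λ minimizes max_{x∈X} x^⊤ Λ_μ^{-1} x over all designs μ on X with Λ_μ invertible; (3) max_{x∈X} x^⊤ Λ_λ^{-1} x = d. Moreover, a design λ satisfying these conditions exists. -/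
/-!
Everything rests on the identity `∑ x ∈ X, v x * (xᵀ A x) = tr (A Λ_v)` (`sum_quad_eq_trace`).

* Taking `A = Λ_v⁻¹` the right-hand side is `d`, so the `v`-average of `xᵀ Λ_v⁻¹ x` is `d` and the
  maximum is at least `d` for every design (`le_maxVal`).
* If the maximum for `w` is at most `d`, then `tr (Λ_w⁻¹ Λ_v) ≤ d` for every design `v`.
  Factoring `Λ_w⁻¹ = Bᵀ B`, the matrix `B Λ_v Bᵀ` is positive semidefinite with trace at most `d`,
  hence has determinant at most `1`, i.e. `det Λ_v ≤ det Λ_w` (`det_le_of_maxVal_le`).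
* Conversely, if some `g = xᵀ Λ_w⁻¹ x` exceeds `d`, moving a small mass `t` to `x` multiplies the
  determinant by `(1 - t) ^ (d - 1) * (1 - t + t g)`, which exceeds `1` for small `t`
  because its derivative at `0` is `g - d` (`maxVal_le_of_det_max`).

So D-optimality is equivalent to the maximum being `d`. A D-optimal design exists by compactness of
the simplex; its design matrix is invertible because the uniform design already has a positive
determinant. The lower bound `d` for the maximum is thus attained, so G-optimality is equivalent
to the maximum being `d` as well.
-/

open Matrix

/-- A design on a finite arm set `X ⊆ ℝ^d`: nonnegative weights summing to one. -/
def IsDesign {d : ℕ} (X : Finset (Fin d → ℝ)) (w : (Fin d → ℝ) → ℝ) : Prop :=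
  (∀ x, 0 ≤ w x) ∧ ∑ x ∈ X, w x = 1

/-- The design matrix `Λ_w = Σ_x w(x) x xᵀ` of a design. -/
noncomputable def designMat {d : ℕ} (X : Finset (Fin d → ℝ))
    (w : (Fin d → ℝ) → ℝ) : Matrix (Fin d) (Fin d) ℝ :=
  ∑ x ∈ X, w x • vecMulVec x x

/-- The `G`-criterion value `max_{x ∈ X} xᵀ Λ_w⁻¹ x` of a design. -/
noncomputable def maxVal {d : ℕ} (X : Finset (Fin d → ℝ)) (hX : X.Nonempty)
    (w : (Fin d → ℝ) → ℝ) : ℝ :=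
  X.sup' hX (fun x => x ⬝ᵥ ((designMat X w)⁻¹ *ᵥ x))

section

variable {d : ℕ} {X : Finset (Fin d → ℝ)}

lemma designMat_posSemidef {w : (Fin d → ℝ) → ℝ} (hw : IsDesign X w) :
    (designMat X w).PosSemidef := by
  refine posSemidef_sum _ fun x _ => ?_
  have h : (vecMulVec x x).PosSemidef := by
    simpa using posSemidef_vecMulVec_self_star x
  exact h.smul (hw.1 x)

lemma designMat_posDef {w : (Fin d → ℝ) → ℝ} (hw : IsDesign X w)
    (hu : IsUnit (designMat X w)) : (designMat X w).PosDef :=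
  (designMat_posSemidef hw).posDef_iff_isUnit.mpr hu

lemma sum_quad_eq_trace (A : Matrix (Fin d) (Fin d) ℝ) (v : (Fin d → ℝ) → ℝ) :
    ∑ x ∈ X, v x * (x ⬝ᵥ (A *ᵥ x)) = (A * designMat X v).trace := by
  simp only [designMat, Finset.mul_sum, trace_sum, Matrix.mul_smul, trace_smul, mul_vecMulVec,
    trace_vecMulVec, smul_eq_mul]
  exact Finset.sum_congr rfl fun x _ => by rw [dotProduct_comm]

lemma quad_le_maxVal (hX : X.Nonempty) (w : (Fin d → ℝ) → ℝ) {x : Fin d → ℝ} (hx : x ∈ X) :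
    x ⬝ᵥ ((designMat X w)⁻¹ *ᵥ x) ≤ maxVal X hX w :=
  Finset.le_sup' (fun x => x ⬝ᵥ ((designMat X w)⁻¹ *ᵥ x)) hx

/-- The maximum dominates the `w`-average, which is `tr (Λ_w⁻¹ Λ_w) = d`. -/
lemma le_maxVal (hX : X.Nonempty) {w : (Fin d → ℝ) → ℝ} (hw : IsDesign X w)
    (hu : IsUnit (designMat X w)) : (d : ℝ) ≤ maxVal X hX w := by
  have h1 := sum_quad_eq_trace (X := X) (designMat X w)⁻¹ w
  rw [nonsing_inv_mul _ ((isUnit_iff_isUnit_det _).1 hu), trace_one, Fintype.card_fin] at h1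
  rw [← h1]
  calc _ ≤ ∑ x ∈ X, w x * maxVal X hX w := Finset.sum_le_sum fun x hx =>
        mul_le_mul_of_nonneg_left (quad_le_maxVal hX w hx) (hw.1 x)
    _ = _ := by rw [← Finset.sum_mul, hw.2, one_mul]

/-- With eigenvalues `μ i`, the bound `μ i ≤ exp (μ i - 1)` gives `det M ≤ exp (tr M - d) ≤ 1`. -/
lemma det_le_one_of_trace_le {M : Matrix (Fin d) (Fin d) ℝ} (hM : M.PosSemidef)
    (ht : M.trace ≤ d) : M.det ≤ 1 := by
  rw [hM.1.det_eq_prod_eigenvalues]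
  rw [hM.1.trace_eq_sum_eigenvalues] at ht
  simp only [RCLike.ofReal_real_eq_id, id] at ht ⊢
  calc ∏ i, hM.1.eigenvalues i ≤ ∏ i, Real.exp (hM.1.eigenvalues i - 1) :=
        Finset.prod_le_prod (fun i _ => hM.eigenvalues_nonneg i) fun i _ => by
          linarith [Real.add_one_le_exp (hM.1.eigenvalues i - 1)]
    _ = Real.exp (∑ i, (hM.1.eigenvalues i - 1)) := (Real.exp_sum _ _).symm
    _ ≤ 1 := by
        rw [Real.exp_le_one_iff, Finset.sum_sub_distrib]
        simpa using ht

lemma det_le_of_maxVal_le (hX : X.Nonempty) {w v : (Fin d → ℝ) → ℝ} (hw : IsDesign X w)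
    (hu : IsUnit (designMat X w)) (hm : maxVal X hX w ≤ d) (hv : IsDesign X v) :
    (designMat X v).det ≤ (designMat X w).det := by
  have hpd := designMat_posDef hw hu
  obtain ⟨B, hB⟩ : ∃ B, (designMat X w)⁻¹ = Bᴴ * B := by
    open scoped MatrixOrder in
    exact CStarAlgebra.nonneg_iff_eq_star_mul_self.mp hpd.inv.posSemidef.nonneg
  have htr : (B * designMat X v * Bᴴ).trace ≤ d := by
    rw [trace_mul_comm, ← Matrix.mul_assoc, ← hB, ← sum_quad_eq_trace]
    calc _ ≤ ∑ x ∈ X, v x * (d : ℝ) := Finset.sum_le_sum fun x hx =>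
          mul_le_mul_of_nonneg_left ((quad_le_maxVal hX w hx).trans hm) (hv.1 x)
      _ = _ := by rw [← Finset.sum_mul, hv.2, one_mul]
  have h1 := det_le_one_of_trace_le ((designMat_posSemidef hv).mul_mul_conjTranspose_same B) htr
  have h2 : (B * designMat X v * Bᴴ).det = (designMat X w).det⁻¹ * (designMat X v).det := by
    rw [← Ring.inverse_eq_inv', ← det_nonsing_inv, hB, det_mul, det_mul, det_mul]
    ring
  rwa [h2, inv_mul_le_iff₀ hpd.det_pos, mul_one] at h1

/-- Rank-one form of the matrix determinant lemma. -/
lemma det_add_smul_vecMulVec {A : Matrix (Fin d) (Fin d) ℝ} (hA : IsUnit A) (s : ℝ)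
    (x : Fin d → ℝ) :
    (A + s • vecMulVec x x).det = A.det * (1 + s * (x ⬝ᵥ (A⁻¹ *ᵥ x))) := by
  have hA' := (isUnit_iff_isUnit_det _).1 hA
  have h1 : A + s • vecMulVec x x
      = A * (1 + replicateCol Unit (A⁻¹ *ᵥ (s • x)) * replicateRow Unit x) := by
    rw [← vecMulVec_eq, Matrix.mul_add, Matrix.mul_one, mul_vecMulVec, mulVec_mulVec,
      mul_nonsing_inv _ hA', one_mulVec, smul_vecMulVec]
  rw [h1, det_mul, det_one_add_replicateCol_mul_replicateRow, mulVec_smul, dotProduct_smul,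
    smul_eq_mul]

/-- Scalar form of the perturbation step: for `n + 1 < g` the factor by which the determinant
changes exceeds `1` for a suitable step size. -/
lemma exists_step {n : ℕ} {g : ℝ} (hg : (n : ℝ) + 1 < g) :
    ∃ t : ℝ, 0 < t ∧ t < 1 ∧ 1 < (1 - t) ^ n * (1 - t + t * g) := by
  have hn : (0 : ℝ) ≤ n := n.cast_nonneg
  have hgp : 0 < g := by linarith
  have hD : 0 < g * (n + 1) := by positivity
  -- By Bernoulli the factor is at least `1 + t (g - n - 1) - t² n (g - 1)`, and this choice of `t`
  -- makes the linear term dominate.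
  obtain ⟨t, ht⟩ : ∃ t, t = (g - (n + 1)) / (g * (n + 1)) := ⟨_, rfl⟩
  have ht' : t * (g * (n + 1)) = g - (n + 1) := by rw [ht]; field_simp
  have h0 : 0 < t := by rw [ht]; exact div_pos (by linarith) hD
  have h1 : t < 1 := by
    rw [ht, div_lt_one hD]
    nlinarith
  refine ⟨t, h0, h1, ?_⟩
  have hb := one_add_mul_le_pow (a := -t) (by linarith) n
  rw [← sub_eq_add_neg] at hb
  have hf : 0 < 1 - t + t * g := by nlinarith
  have h2 := mul_le_mul_of_nonneg_right hb hf.le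
  have h3 : t * (n * (g - 1)) < g - (n + 1) := by
    rw [← ht']
    exact mul_lt_mul_of_pos_left (by nlinarith) h0
  nlinarith [mul_lt_mul_of_pos_left h3 h0]

lemma maxVal_le_of_det_max (hX : X.Nonempty) {w : (Fin d → ℝ) → ℝ} (hw : IsDesign X w)
    (hu : IsUnit (designMat X w))
    (hD : ∀ v, IsDesign X v → (designMat X v).det ≤ (designMat X w).det) :
    maxVal X hX w ≤ d := by
  refine Finset.sup'_le _ _ fun x hx => ?_
  by_contra! hlt
  rcases d with _ | n
  · simp at hlt
  push_cast at hlt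
  obtain ⟨t, h0, h1, ht⟩ := exists_step hlt
  have h1' : 0 < 1 - t := by linarith
  classical
  let v : (Fin (n + 1) → ℝ) → ℝ := fun y => (1 - t) * w y + if y = x then t else 0
  have hv : IsDesign X v := by
    refine ⟨fun y => add_nonneg (mul_nonneg h1'.le (hw.1 y)) (by split_ifs <;> linarith), ?_⟩
    simp only [v, Finset.sum_add_distrib, ← Finset.mul_sum, hw.2, Finset.sum_ite_eq', hx, if_true]
    ring
  have hmat : designMat X v = (1 - t) • (designMat X w + (t / (1 - t)) • vecMulVec x x) := by
    rw [smul_add, smul_smul, mul_div_cancel₀ _ h1'.ne']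
    simp only [designMat, v, add_smul, ite_smul, zero_smul, Finset.sum_add_distrib,
      Finset.sum_ite_eq', hx, if_true, Finset.smul_sum, smul_smul]
  have hdet := hD v hv
  have hpos := (designMat_posDef hw hu).det_pos
  rw [hmat, det_smul, det_add_smul_vecMulVec hu, Fintype.card_fin] at hdet
  set g := x ⬝ᵥ ((designMat X w)⁻¹ *ᵥ x)
  have he : (1 - t) ^ (n + 1) * ((designMat X w).det * (1 + t / (1 - t) * g))
      = (designMat X w).det * ((1 - t) ^ n * (1 - t + t * g)) := by
    field_simp
    ring
  rw [he] at hdet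
  nlinarith [mul_lt_mul_of_pos_left ht hpos]

/-- The uniform design has a positive definite design matrix, since `yᵀ Λ y = 0` forces `y` to be
orthogonal to the spanning set `X`. -/
lemma exists_design_det_pos (hX : X.Nonempty)
    (hspan : Submodule.span ℝ (X : Set (Fin d → ℝ)) = ⊤) :
    ∃ u, IsDesign X u ∧ 0 < (designMat X u).det := by
  have hc : (0 : ℝ) < X.card := by exact_mod_cast hX.card_pos
  have hdes : IsDesign X fun _ => (X.card : ℝ)⁻¹ :=
    ⟨fun _ => by positivity, by simp [hc.ne']⟩
  refine ⟨_, hdes, PosDef.det_pos ?_⟩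
  refine PosDef.of_dotProduct_mulVec_pos (designMat_posSemidef hdes).1 fun y hy => ?_
  have hq : star y ⬝ᵥ (designMat X (fun _ => (X.card : ℝ)⁻¹) *ᵥ y)
      = ∑ x ∈ X, (X.card : ℝ)⁻¹ * (x ⬝ᵥ y) ^ 2 := by
    simp only [designMat, sum_mulVec, dotProduct_sum, smul_mulVec, dotProduct_smul,
      vecMulVec_mulVec, star_trivial, smul_eq_mul, op_smul_eq_smul]
    refine Finset.sum_congr rfl fun x _ => ?_
    rw [dotProduct_comm y x]
    ring
  have hnn : ∀ x ∈ X, 0 ≤ (X.card : ℝ)⁻¹ * (x ⬝ᵥ y) ^ 2 := fun x _ => by positivity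
  rw [hq]
  refine lt_of_le_of_ne (Finset.sum_nonneg hnn) fun h0 => hy ?_
  have hz := (Finset.sum_eq_zero_iff_of_nonneg hnn).1 h0.symm
  have hall : ∀ z ∈ Submodule.span ℝ (X : Set (Fin d → ℝ)), z ⬝ᵥ y = 0 := by
    intro z hz'
    induction hz' using Submodule.span_induction with
    | mem x hx => simpa [hc.ne'] using hz x hx
    | zero => simp
    | add a b _ _ ha hb => rw [add_dotProduct, ha, hb, add_zero]
    | smul c a _ ha => rw [smul_dotProduct, ha, smul_zero]
  exact dotProduct_self_eq_zero.1 (hall y (hspan ▸ Submodule.mem_top))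

/-- `det Λ` is a continuous function of the weights on `X`, which range over a compact simplex. -/
lemma exists_det_max (hX : X.Nonempty) :
    ∃ w, IsDesign X w ∧ ∀ v, IsDesign X v → (designMat X v).det ≤ (designMat X w).det := by
  classical
  let F : (X → ℝ) → ℝ := fun p => (∑ x : X, p x • vecMulVec (x : Fin d → ℝ) x).det
  have hF : Continuous F := by
    refine Continuous.matrix_det ?_
    fun_prop
  have : Nonempty X := hX.to_subtype
  obtain ⟨p, hp, hmax⟩ := (isCompact_stdSimplex ℝ X).exists_isMaxOn
    ⟨_, single_mem_stdSimplex ℝ (Classical.arbitrary X)⟩ hF.continuousOn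
  have hFv : ∀ v : (Fin d → ℝ) → ℝ, (designMat X v).det = F fun x => v x := fun v => by
    simp only [F, designMat]
    rw [← Finset.sum_coe_sort X]
  let w : (Fin d → ℝ) → ℝ := fun y => if h : y ∈ X then p ⟨y, h⟩ else 0
  have hwp : (fun x : X => w x) = p := by
    funext x
    simp [w]
  refine ⟨w, ⟨fun y => ?_, ?_⟩, fun v hv => ?_⟩
  · by_cases h : y ∈ X
    · simpa [w, h] using hp.1 ⟨y, h⟩
    · simp [w, h]
  · rw [← Finset.sum_coe_sort X, ← hp.2]
    exact Finset.sum_congr rfl fun x _ => congrFun hwp x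
  · rw [hFv, hFv, hwp]
    refine hmax ⟨fun x => hv.1 x, ?_⟩
    rw [← hv.2, ← Finset.sum_coe_sort X]

end

/-- Kiefer–Wolfowitz equivalence theorem: for a design `w` with invertible design
matrix, D-optimality, G-optimality and `max_{x} xᵀ Λ_w⁻¹ x = d` are equivalent;
moreover such an optimal design exists. -/
theorem statement10 {d : ℕ} (X : Finset (Fin d → ℝ)) (hX : X.Nonempty)
    (hspan : Submodule.span ℝ (X : Set (Fin d → ℝ)) = ⊤) :
    (∀ w, IsDesign X w → IsUnit (designMat X w) →
      (((∀ v, IsDesign X v → (designMat X v).det ≤ (designMat X w).det) ↔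
        (∀ v, IsDesign X v → IsUnit (designMat X v) →
          maxVal X hX w ≤ maxVal X hX v)) ∧
       ((∀ v, IsDesign X v → IsUnit (designMat X v) →
          maxVal X hX w ≤ maxVal X hX v) ↔
        maxVal X hX w = d))) ∧
    (∃ w, IsDesign X w ∧ IsUnit (designMat X w) ∧ maxVal X hX w = d) := by
  have hex : ∃ w, IsDesign X w ∧ IsUnit (designMat X w) ∧ maxVal X hX w = d := by
    obtain ⟨w, hw, hmax⟩ := exists_det_max hX
    obtain ⟨u, hu, hpos⟩ := exists_design_det_pos hX hspan
    have hunit : IsUnit (designMat X w) :=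
      (isUnit_iff_isUnit_det _).2 (hpos.trans_le (hmax u hu)).ne'.isUnit
    exact ⟨w, hw, hunit, (maxVal_le_of_det_max hX hw hunit hmax).antisymm (le_maxVal hX hw hunit)⟩
  refine ⟨fun w hw hu => ?_, hex⟩
  have hDd : (∀ v, IsDesign X v → (designMat X v).det ≤ (designMat X w).det) ↔
      maxVal X hX w = d :=
    ⟨fun h => (maxVal_le_of_det_max hX hw hu h).antisymm (le_maxVal hX hw hu),
      fun h _ hv => det_le_of_maxVal_le hX hw hu h.le hv⟩
  have hGd : (∀ v, IsDesign X v → IsUnit (designMat X v) → maxVal X hX w ≤ maxVal X hX v) ↔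
      maxVal X hX w = d := by
    refine ⟨fun h => ?_, fun h v hv hvu => h.le.trans (le_maxVal hX hv hvu)⟩
    obtain ⟨v, hv, hvu, hvd⟩ := hex
    exact ((h v hv hvu).trans hvd.le).antisymm (le_maxVal hX hw hu)
  exact ⟨hDd.trans hGd.symm, hGd⟩
end
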